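/- Let λ, b ∈ ℂ with b ≠ 0 and b³ − (λ² + 3/4)·b + (λ² − 1/4) = 0 (i.e. b is a root of P_λ). Set a = b² − (3/4 + λ²)/3 and assume a ≠ 0. Then for every z ∈ ℂ with 1 + 2z + (a/b²)·z² ≠ 0, setting w = b + (a/b)·z, one has 3w² − (λ² + 3/4) ≠ 0 and (b/a)·(N_λ(w) − b) = z²·(1 + (2/3)·(a/b²)·z)/(1 + 2z + (a/b²)·z²). (This says that the conjugate f_λ = β_λ ∘ N_λ ∘ β_λ^{-1} of N_λ by the affine map β_λ(w) = (b/a)(w − b) is given by f_λ(z) = z²·(1 + (2/3)(a/b²)z)/(1 + 2z + (a/b²)z²).) -/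

import Mathlib

/-!
At a root `b` of `P(w) = w³ - c w + d` the Newton map satisfies
`N(b + h) - b = h² (3 b + 2 h) / P'(b + h)`, so a simple root is a superattracting fixed point.
With `a = P'(b) / 3`, the scaling `h = (a / b) z` gives
`P'(b + h) = 3 a (1 + 2 z + (a / b²) z²)` and
`h² (3 b + 2 h) = 3 a (a / b) z² (1 + (2 / 3) (a / b²) z)`, so the factor `3 a` cancels.
-/

section CubicNewtonMap

variable {K : Type*} [Field K] {a b c d : K}

/-- The Newton map `w ↦ w - P(w) / P'(w)` of the cubic `P(w) = w³ - c w + d`, written as a single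
fraction; at the zeros of `P'` it takes the junk value `0`. -/
def cubicNewtonMap (c d w : K) : K :=
  (2 * w ^ 3 - d) / (3 * w ^ 2 - c)

theorem cubicNewtonMap_add_sub_of_root (hroot : b ^ 3 - c * b + d = 0) {h : K}
    (hderiv : 3 * (b + h) ^ 2 - c ≠ 0) :
    cubicNewtonMap c d (b + h) - b = h ^ 2 * (3 * b + 2 * h) / (3 * (b + h) ^ 2 - c) := by
  rw [cubicNewtonMap, div_sub' hderiv]
  congr 1
  linear_combination -hroot

theorem cubic_deriv_add_div_mul (hb : b ≠ 0) (ha : 3 * a = 3 * b ^ 2 - c) (z : K) :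
    3 * (b + a / b * z) ^ 2 - c = 3 * a * (1 + 2 * z + a / b ^ 2 * z ^ 2) := by
  obtain rfl : c = 3 * b ^ 2 - 3 * a := by linear_combination ha
  field_simp
  ring

theorem newton_cubic_conjugate_form_general (h3 : (3 : K) ≠ 0) (hb : b ≠ 0)
    (hroot : b ^ 3 - c * b + d = 0) (ha : 3 * a = 3 * b ^ 2 - c) (ha0 : a ≠ 0) (z : K)
    (hz : 1 + 2 * z + a / b ^ 2 * z ^ 2 ≠ 0) :
    3 * (b + a / b * z) ^ 2 - c ≠ 0 ∧
      b / a * (cubicNewtonMap c d (b + a / b * z) - b)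
        = z ^ 2 * (1 + 2 / 3 * (a / b ^ 2) * z) / (1 + 2 * z + a / b ^ 2 * z ^ 2) := by
  have h3a : 3 * a ≠ 0 := mul_ne_zero h3 ha0
  have hderiv : 3 * (b + a / b * z) ^ 2 - c ≠ 0 := by
    rw [cubic_deriv_add_div_mul hb ha]
    exact mul_ne_zero h3a hz
  have hnum : b / a * ((a / b * z) ^ 2 * (3 * b + 2 * (a / b * z)))
      = 3 * a * (z ^ 2 * (1 + 2 / 3 * (a / b ^ 2) * z)) := by
    field_simp
  refine ⟨hderiv, ?_⟩
  rw [cubicNewtonMap_add_sub_of_root hroot hderiv, ← mul_div_assoc, hnum,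
    cubic_deriv_add_div_mul hb ha, mul_div_mul_left _ _ h3a]

end CubicNewtonMap

/-- Conjugating the cubic Newton map `N_λ` by the affine map `β_λ(w) = (b/a)(w - b)`,
where `b` is a root of `P_λ` and `a = b² - (3/4 + λ²)/3 ≠ 0`, yields the map
`f_λ(z) = z²·(1 + (2/3)(a/b²)z)/(1 + 2z + (a/b²)z²)`. -/
theorem newton_cubic_conjugate_form (lam b : ℂ) (hb : b ≠ 0)
    (hroot : b ^ 3 - (lam ^ 2 + 3/4) * b + (lam ^ 2 - 1/4) = 0)
    (a : ℂ) (ha : a = b ^ 2 - (3/4 + lam ^ 2) / 3) (ha0 : a ≠ 0) :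
    ∀ z : ℂ, 1 + 2 * z + (a / b ^ 2) * z ^ 2 ≠ 0 →
      3 * (b + (a / b) * z) ^ 2 - (lam ^ 2 + 3/4) ≠ 0 ∧
      (b / a) * ((2 * (b + (a / b) * z) ^ 3 - (lam ^ 2 - 1/4)) /
          (3 * (b + (a / b) * z) ^ 2 - (lam ^ 2 + 3/4)) - b)
        = z ^ 2 * (1 + (2/3) * (a / b ^ 2) * z) / (1 + 2 * z + (a / b ^ 2) * z ^ 2) := by
  exact newton_cubic_conjugate_form_general three_ne_zero hb hroot
    (by linear_combination 3 * ha) ha0
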